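/- Let (B, A, i, e, l) be a cleft extension of abelian categories in which A and B have arbitrary coproducts, and suppose e has a right adjoint functor r. Let P₁ →σ P₀ → B → 0 be a projective presentation of B in B. Then l(B) is a silting object of A with respect to l(σ) if and only if B is a silting object of B with respect to σ and F(B) ∈ Gen(B), where F(B) := e(ker(μ_{i(B)})) and μ is the counit of (l, e). -/

import Mathlib

open CategoryTheory Limits

universe v u₁ u₂

/-- For a morphism `σ : X ⟶ Y` in a category `C`, `DClass σ` is the class of objects `L`
such that `Hom_C(σ, L) : Hom_C(Y, L) → Hom_C(X, L)` is surjective. -/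
def DClass {C : Type u₁} [Category.{v} C] {X Y : C} (σ : X ⟶ Y) (L : C) : Prop :=
  Function.Surjective (fun g : Y ⟶ L => σ ≫ g)

/-- `Gen X` is the class of epimorphic images of coproducts of copies of `X`. -/
def Gen {C : Type u₁} [Category.{v} C] [HasCoproducts.{v} C] (X L : C) : Prop :=
  ∃ (I : Type v) (p : (∐ fun _ : I => X) ⟶ L), Epi p

/-- Given a morphism `σ` occurring in a projective presentation `P₁ ⟶ P₀ ⟶ X ⟶ 0`, the object
`X` is silting with respect to `σ` if `Gen X = D_σ`. -/
def IsSilting {C : Type u₁} [Category.{v} C] [HasCoproducts.{v} C]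
    {P₁ P₀ : C} (σ : P₁ ⟶ P₀) (X : C) : Prop :=
  ∀ L : C, Gen X L ↔ DClass σ L

theorem gen_iff {C : Type u₁} [Category.{v} C] [HasCoproducts.{v} C] (X L : C) :
    Gen X L ↔ ∀ (Z : C) (g h : L ⟶ Z), (∀ f : X ⟶ L, f ≫ g = f ≫ h) → g = h := by
  constructor
  · rintro ⟨I, p, hp⟩ Z g h H
    rw [← cancel_epi p]
    refine Sigma.hom_ext _ _ fun b => ?_
    simpa using H (Sigma.ι (fun _ : I => X) b ≫ p)
  · intro H
    refine ⟨X ⟶ L, Sigma.desc (fun f => f), ⟨fun {Z} g h hgh => H Z g h fun f => ?_⟩⟩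
    have := Sigma.ι (fun _ : (X ⟶ L) => X) f ≫= hgh
    simpa using this

theorem gen_trans {C : Type u₁} [Category.{v} C] [HasCoproducts.{v} C] {X Y L : C}
    (h₁ : Gen X Y) (h₂ : Gen Y L) : Gen X L := by
  rw [gen_iff] at *
  intro Z g h H
  refine h₂ Z g h fun f => h₁ Z _ _ fun a => ?_
  simpa using H (a ≫ f)

theorem gen_of_epi {C : Type u₁} [Category.{v} C] [HasCoproducts.{v} C] {X Y L : C}
    (h₁ : Gen X Y) (p : Y ⟶ L) [Epi p] : Gen X L := by
  obtain ⟨I, q, hq⟩ := h₁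
  exact ⟨I, q ≫ p, epi_comp q p⟩

theorem gen_self {C : Type u₁} [Category.{v} C] [HasCoproducts.{v} C] (X : C) : Gen X X := by
  rw [gen_iff]
  intro Z g h H
  simpa using H (𝟙 X)

theorem dclass_retract {C : Type u₁} [Category.{v} C] {X Y L M : C} {σ : X ⟶ Y}
    (h : DClass σ L) (p : L ⟶ M) (s : M ⟶ L) (hs : s ≫ p = 𝟙 M) : DClass σ M := by
  intro f
  obtain ⟨g, hg⟩ := h (f ≫ s)
  refine ⟨g ≫ p, ?_⟩
  dsimp only at hg ⊢
  rw [← Category.assoc, hg, Category.assoc, hs, Category.comp_id]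

theorem dclass_adj {A : Type u₁} {B : Type u₂} [Category.{v} A] [Category.{v} B]
    {e : A ⥤ B} {l : B ⥤ A} (adj : l ⊣ e) {X Y : B} (σ : X ⟶ Y) (L : A) :
    DClass (l.map σ) L ↔ DClass σ (e.obj L) := by
  constructor
  · intro h f
    obtain ⟨g, hg⟩ := h ((adj.homEquiv _ _).symm f)
    refine ⟨adj.homEquiv _ _ g, ?_⟩
    dsimp only at hg ⊢
    rw [← adj.homEquiv_naturality_left, hg, Equiv.apply_symm_apply]
  · intro h f
    obtain ⟨g, hg⟩ := h (adj.homEquiv _ _ f)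
    refine ⟨(adj.homEquiv _ _).symm g, ?_⟩
    dsimp only at hg ⊢
    rw [← adj.homEquiv_naturality_left_symm, hg, Equiv.symm_apply_apply]

theorem dclass_ext {C : Type u₁} [Category.{v} C] [Preadditive C] {X Y K E Q : C} {σ : X ⟶ Y}
    (k : K ⟶ E) (t : E ⟶ K) (p : E ⟶ Q) (s : Q ⟶ E) (h : t ≫ k + p ≫ s = 𝟙 E)
    (hK : DClass σ K) (hQ : DClass σ Q) : DClass σ E := by
  intro f
  obtain ⟨a, ha⟩ := hK (f ≫ t)
  obtain ⟨b, hb⟩ := hQ (f ≫ p)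
  refine ⟨a ≫ k + b ≫ s, ?_⟩
  dsimp only at ha hb ⊢
  rw [Preadditive.comp_add, ← Category.assoc, ha, ← Category.assoc, hb, Category.assoc,
    Category.assoc, ← Preadditive.comp_add, h, Category.comp_id]

theorem splitting {A : Type u₁} {B : Type u₂} [Category.{v} A] [Category.{v} B]
    [Abelian A] [Abelian B] (e : A ⥤ B) [PreservesFiniteLimits e]
    {M N : A} (m : M ⟶ N) (s : e.obj N ⟶ e.obj M) (hs : s ≫ e.map m = 𝟙 _) :
    ∃ t : e.obj M ⟶ e.obj (kernel m), t ≫ e.map (kernel.ι m) + e.map m ≫ s = 𝟙 _ ∧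
      e.map (kernel.ι m) ≫ t = 𝟙 _ := by
  have : e.PreservesZeroMorphisms := by infer_instance
  have w : (𝟙 _ - e.map m ≫ s) ≫ e.map m = 0 := by
    simp [Preadditive.sub_comp, hs]
  have ht : (kernel.lift (e.map m) _ w ≫ (PreservesKernel.iso e m).inv) ≫ e.map (kernel.ι m)
      = 𝟙 _ - e.map m ≫ s := by
    simp
  refine ⟨kernel.lift (e.map m) _ w ≫ (PreservesKernel.iso e m).inv, ?_, ?_⟩
  · rw [ht]; simp
  · rw [← cancel_mono (e.map (kernel.ι m)), Category.assoc, ht]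
    simp [Preadditive.comp_sub, ← Functor.map_comp_assoc]

/-- Let `(B, A, i, e, l)` be a cleft extension of abelian categories with
arbitrary coproducts, and suppose `e` has a right adjoint functor `r`. Let
`P₁ ⟶σ P₀ ⟶π Bo ⟶ 0` be a projective presentation of `Bo` in `B`. Then `l(Bo)` is silting in
`A` with respect to `l(σ)` if and only if `Bo` is silting in `B` with respect to `σ` and
`F(Bo) ∈ Gen(Bo)`, where `F(Bo) := e(ker(μ_{i(Bo)}))` and `μ` is the counit of `(l, e)`. -/
theorem stmt16 {A : Type u₁} {B : Type u₂} [Category.{v} A] [Category.{v} B]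
    [Abelian A] [Abelian B] [EnoughProjectives A] [EnoughProjectives B]
    [HasCoproducts.{v} A] [HasCoproducts.{v} B]
    (i : B ⥤ A) (e : A ⥤ B) (l : B ⥤ A) [e.Faithful]
    [PreservesFiniteLimits e] [PreservesFiniteColimits e]
    (adj : l ⊣ e) (η : i ⋙ e ≅ 𝟭 B)
    (r : B ⥤ A) (adjr : e ⊣ r)
    {P₁ P₀ Bo : B} (σ : P₁ ⟶ P₀) (π : P₀ ⟶ Bo)
    (hP₁ : Projective P₁) (hP₀ : Projective P₀) [Epi π]
    (w : σ ≫ π = 0) (hexact : (ShortComplex.mk σ π w).Exact) :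
    IsSilting (l.map σ) (l.obj Bo) ↔
      IsSilting σ Bo ∧ Gen Bo (e.obj (kernel (adj.counit.app (i.obj Bo)))) := by
  have hs : ∀ L : B, adj.unit.app (e.obj (i.obj L)) ≫ e.map (adj.counit.app (i.obj L)) = 𝟙 _ :=
    fun L => adj.right_triangle_components (i.obj L)
  -- Bo is a retract of e (l Bo) type objects
  have hret : ∀ L : B, DClass σ (e.obj (l.obj L)) → DClass σ L := fun L h =>
    dclass_retract h (e.map (l.map (η.inv.app L)) ≫ e.map (adj.counit.app (i.obj L)) ≫ η.hom.app L)
      (η.inv.app L ≫ adj.unit.app (e.obj (i.obj L)) ≫ e.map (l.map (η.hom.app L))) (by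
        have h1 : e.map (l.map (η.hom.app L)) ≫ e.map (l.map (η.inv.app L)) = 𝟙 _ := by
          rw [← e.map_comp, ← l.map_comp, Iso.hom_inv_id_app]; simp
        simp only [Category.assoc]
        rw [reassoc_of% h1, reassoc_of% (hs L)]
        simp)
  have hiso : ∀ L : B, DClass σ L → DClass σ (e.obj (i.obj L)) := fun L h =>
    dclass_retract h (η.inv.app L) (η.hom.app L) (by simp)
  obtain ⟨t, ht₁, ht₂⟩ := splitting e (adj.counit.app (i.obj Bo)) _ (hs Bo)
  let φ : l.obj (e.obj (i.obj Bo)) ≅ l.obj Bo := l.mapIso (η.app Bo)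
  have ep : Epi t := by
    have : IsSplitEpi t := ⟨⟨⟨_, ht₂⟩⟩⟩
    infer_instance
  constructor
  · intro H
    have hσ : IsSilting σ Bo := by
      intro L
      constructor
      · intro hL
        apply hret
        rw [← dclass_adj adj, ← H]
        rw [gen_iff] at hL ⊢
        intro Z g h hgh
        apply (adj.homEquiv _ _).injective
        apply hL
        intro f
        rw [← adj.homEquiv_naturality_left, ← adj.homEquiv_naturality_left, hgh]
      · intro hL
        have h1 := (H (i.obj L)).2 ((dclass_adj adj σ _).2 (hiso L hL))
        rw [gen_iff] at h1 ⊢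
        intro Z g h hgh
        have h2 : i.map g = i.map h := by
          apply h1
          intro f
          apply (adj.homEquiv _ _).injective
          rw [adj.homEquiv_naturality_right, adj.homEquiv_naturality_right,
            ← cancel_mono (η.hom.app Z)]
          have n1 := η.hom.naturality g
          have n2 := η.hom.naturality h
          dsimp at n1 n2
          rw [Category.assoc, Category.assoc]
          erw [n1, n2]
          have := hgh (adj.homEquiv _ _ f ≫ η.hom.app L)
          simpa only [Category.assoc] using this
        have n1 := η.hom.naturality g
        have n2 := η.hom.naturality h
        dsimp at n1 n2
        rw [← cancel_epi (η.hom.app L)]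
        rw [h2] at n1
        exact n1.symm.trans n2
    refine ⟨hσ, ?_⟩
    have h1 : Gen Bo (e.obj (l.obj Bo)) := by
      rw [hσ, ← dclass_adj adj, ← H]
      exact gen_self _
    exact gen_of_epi h1 (e.map φ.inv ≫ t)
  · rintro ⟨H, hF⟩ L
    rw [dclass_adj adj, ← H]
    constructor
    · intro hL
      have h1 : DClass σ (e.obj (l.obj (e.obj (i.obj Bo)))) :=
        dclass_ext _ _ _ _ ht₁ ((H _).1 hF) (hiso Bo ((H _).1 (gen_self _)))
      have h2 : Gen Bo (e.obj (l.obj Bo)) := gen_of_epi ((H _).2 h1) (e.map φ.hom)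
      refine gen_trans h2 ?_
      rw [gen_iff] at hL ⊢
      intro Z g h hgh
      apply (adjr.homEquiv _ _).injective
      apply hL
      intro f
      rw [← adjr.homEquiv_naturality_left, ← adjr.homEquiv_naturality_left, hgh]
    · intro hL
      rw [gen_iff] at hL ⊢
      intro Z g h hgh
      apply e.map_injective
      apply hL
      intro f
      apply (adj.homEquiv _ _).symm.injective
      rw [adj.homEquiv_naturality_right_symm, adj.homEquiv_naturality_right_symm, hgh]
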